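/- Let K ≥ 2, Σ ∈ ℰ, T ~ N(0,Σ), and consider the uniform design D_i = g(T_i). Then for every arm k, the Horvitz–Thompson estimator τ̂_k = (K/n)Σ_i 1{D_i=k}Y_i(k) satisfies Var(τ̂_k) = (K²/n²) · Y(k)ᵀ f_k(Σ) Y(k), with f_k applied entrywise. -/

import Mathlib

open MeasureTheory ProbabilityTheory Matrix Real
open scoped BigOperators ENNReal NNReal

noncomputable section

/-- Variance of a real random variable on a measure space. -/
def var {Ω : Type*} [MeasureSpace Ω] (U : Ω → ℝ) : ℝ :=
  ∫ ω, (U ω - ∫ ω', U ω') ^ 2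

/-- The standard normal CDF `Φ`. -/
def stdGaussianCDF (x : ℝ) : ℝ := (gaussianReal 0 1 (Set.Iic x)).toReal

/-- The set of values `t` mapped by the Gaussianization map `g` to arm `k`
(arms are `0`-indexed: `k : Fin K` represents arm `k+1`; `q m = Φ⁻¹(m/K)`). -/
def armSet (q : ℕ → ℝ) (K : ℕ) (k : Fin K) : Set ℝ :=
  if k.val = 0 then Set.Iic (q 1)
  else if k.val = K - 1 then Set.Ioi (q (K - 1))
  else Set.Ioc (q k.val) (q (k.val + 1))

/-- The function `r_{i,j}(ρ)`. -/
def rfun (q : ℕ → ℝ) (i j : ℕ) (ρ : ℝ) : ℝ :=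
  ∫ r in (0 : ℝ)..ρ,
    (2 * π * Real.sqrt (1 - r ^ 2))⁻¹ *
      Real.exp (-((q i ^ 2 + q j ^ 2 - 2 * r * q i * q j) / (2 * (1 - r ^ 2))))

/-- The function `f_k` (arms `0`-indexed: `k : Fin K` represents arm `k+1`). -/
def fkfun (q : ℕ → ℝ) (K : ℕ) (k : Fin K) (ρ : ℝ) : ℝ :=
  if k.val = 0 then rfun q 1 1 ρ
  else if k.val = K - 1 then rfun q (K - 1) (K - 1) ρ
  else rfun q k.val k.val ρ + rfun q (k.val + 1) (k.val + 1) ρ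
    - 2 * rfun q k.val (k.val + 1) ρ

/-!
Let `Φ₂(a, b, ρ)` and `φ₂(a, b, ρ)` be the distribution function and the density of the standard
bivariate normal law with correlation `ρ`. Conditioning on the first coordinate,
`Φ₂(a, b, ρ) = ∫ x ≤ a, φ(x) Φ((b - ρ x) / √(1 - ρ²))`. The `ρ`-derivative of the integrand is
`∂φ₂(x, b, ρ)/∂x`, so the integral of it telescopes to Plackett's identity `∂Φ₂/∂ρ = φ₂`. As `Φ₂`
is continuous in `ρ` up to `ρ = ±1`, where there is no density, the covariance of the indicators of
`X ≤ a` and `Y ≤ b`, which is `Φ₂(a, b, ρ) - Φ₂(a, b, 0)`, equals `∫ r in 0..ρ, φ₂(a, b, r)`. The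
indicator of an arm is, up to a constant, a combination of at most two half-line indicators, and
bilinearity of the covariance does the rest.
-/

local notation "φ" => gaussianPDFReal 0 1
local notation "Φ" => stdGaussianCDF

section StandardNormal

lemma hasDerivAt_integral_Iic {E : Type*} [NormedAddCommGroup E] [NormedSpace ℝ E]
    [CompleteSpace E] {f : ℝ → E} {x : ℝ} (hf : Integrable f) (hx : ContinuousAt f x) :
    HasDerivAt (fun u => ∫ t in Set.Iic u, f t) (f x) x := by
  have hsplit (u : ℝ) :
      ∫ t in Set.Iic u, f t = (∫ t in Set.Iic x, f t) + ∫ t in x..u, f t := by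
    rw [← intervalIntegral.integral_Iic_sub_Iic hf.integrableOn hf.integrableOn]
    abel
  rw [funext hsplit]
  exact (intervalIntegral.integral_hasDerivAt_right hf.intervalIntegrable
    hf.aestronglyMeasurable.stronglyMeasurableAtFilter hx).const_add _

lemma continuous_gaussianPDFReal (μ : ℝ) (v : ℝ≥0) : Continuous (gaussianPDFReal μ v) := by
  unfold gaussianPDFReal
  fun_prop

lemma gaussianPDFReal_zero_one (x : ℝ) : φ x = (√(2 * π))⁻¹ * Real.exp (-x ^ 2 / 2) := by
  simp [gaussianPDFReal]

lemma gaussianPDFReal_zero_one_le_one (x : ℝ) : φ x ≤ 1 := by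
  have hnorm : (√(2 * π))⁻¹ ≤ 1 :=
    inv_le_one_of_one_le₀ (Real.one_le_sqrt.2 (by linarith [Real.pi_gt_three]))
  have hexp : Real.exp (-x ^ 2 / 2) ≤ 1 := Real.exp_le_one_iff.2 (by linarith [sq_nonneg x])
  rw [gaussianPDFReal_zero_one]
  exact mul_le_one₀ hnorm (Real.exp_nonneg _) hexp

lemma integrable_gaussianPDFReal_mul_const_add_abs (c : ℝ) :
    Integrable fun x => φ x * (c + |x|) := by
  have habs : Integrable (fun x : ℝ => c + |x|) (gaussianReal 0 1) :=
    (integrable_const c).add IsGaussian.integrable_id.abs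
  rw [gaussianReal_of_var_ne_zero _ one_ne_zero, integrable_withDensity_iff_integrable_smul'
    (measurable_gaussianPDF _ _) (by simp [gaussianPDF])] at habs
  simpa [toReal_gaussianPDF] using habs

lemma stdGaussianCDF_eq_cdf : Φ = cdf (gaussianReal 0 1) := by
  ext x
  rw [cdf_eq_real]
  rfl

lemma stdGaussianCDF_eq_integral (x : ℝ) : Φ x = ∫ t in Set.Iic x, φ t := by
  rw [stdGaussianCDF, gaussianReal_apply_eq_integral _ one_ne_zero,
    ENNReal.toReal_ofReal (integral_nonneg fun t => gaussianPDFReal_nonneg 0 1 t)]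

lemma hasDerivAt_stdGaussianCDF (x : ℝ) : HasDerivAt Φ (φ x) x := by
  rw [funext stdGaussianCDF_eq_integral]
  exact hasDerivAt_integral_Iic (integrable_gaussianPDFReal 0 1)
    (continuous_gaussianPDFReal 0 1).continuousAt

lemma continuous_stdGaussianCDF : Continuous Φ :=
  continuous_iff_continuousAt.2 fun x => (hasDerivAt_stdGaussianCDF x).continuousAt

lemma norm_stdGaussianCDF_le_one (x : ℝ) : ‖Φ x‖ ≤ 1 := by
  rw [stdGaussianCDF_eq_cdf, Real.norm_of_nonneg (cdf_nonneg _ x)]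
  exact cdf_le_one _ x

end StandardNormal

section BivariateDensity

/-- The density at `(a, b)` of the standard bivariate normal law with correlation `ρ`. For `|ρ| ≥ 1`
no density exists, and the formula then returns `0` because `√(1 - ρ ^ 2) = 0`. -/
def bivariateNormalPDF (a b ρ : ℝ) : ℝ :=
  (2 * π * √(1 - ρ ^ 2))⁻¹ *
    Real.exp (-((a ^ 2 + b ^ 2 - 2 * ρ * a * b) / (2 * (1 - ρ ^ 2))))

lemma bivariateNormalPDF_comm (a b ρ : ℝ) :
    bivariateNormalPDF a b ρ = bivariateNormalPDF b a ρ := by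
  simp only [bivariateNormalPDF, add_comm (a ^ 2), mul_right_comm _ a b]

lemma bivariateNormalPDF_nonneg (a b ρ : ℝ) : 0 ≤ bivariateNormalPDF a b ρ := by
  unfold bivariateNormalPDF
  positivity

lemma measurable_bivariateNormalPDF (b ρ : ℝ) :
    Measurable fun x => bivariateNormalPDF x b ρ := by
  unfold bivariateNormalPDF
  fun_prop

variable {ρ : ℝ} (a b x : ℝ)

lemma bivariateNormalPDF_eq_mul_div (hρ : ρ ^ 2 < 1) :
    bivariateNormalPDF a b ρ = φ a * φ ((b - ρ * a) / √(1 - ρ ^ 2)) / √(1 - ρ ^ 2) := by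
  have hpos : 0 < 1 - ρ ^ 2 := sub_pos.2 hρ
  have hexponent : -((a ^ 2 + b ^ 2 - 2 * ρ * a * b) / (2 * (1 - ρ ^ 2))) =
      -a ^ 2 / 2 + -((b - ρ * a) / √(1 - ρ ^ 2)) ^ 2 / 2 := by
    rw [div_pow, Real.sq_sqrt hpos.le]
    field_simp
    ring
  have hnorm : (2 * π)⁻¹ = (√(2 * π))⁻¹ * (√(2 * π))⁻¹ := by
    rw [← mul_inv, Real.mul_self_sqrt (by positivity)]
  rw [bivariateNormalPDF, hexponent, Real.exp_add, mul_inv, hnorm, gaussianPDFReal_zero_one,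
    gaussianPDFReal_zero_one]
  ring

lemma bivariateNormalPDF_le_div (hρ : ρ ^ 2 < 1) :
    bivariateNormalPDF a b ρ ≤ φ a / √(1 - ρ ^ 2) := by
  rw [bivariateNormalPDF_eq_mul_div a b hρ]
  gcongr
  exact mul_le_of_le_one_right (gaussianPDFReal_nonneg 0 1 a) (gaussianPDFReal_zero_one_le_one _)

lemma hasDerivAt_bivariateNormalPDF_left (hρ : ρ ^ 2 < 1) :
    HasDerivAt (fun x => bivariateNormalPDF x b ρ)
      (bivariateNormalPDF x b ρ * ((ρ * b - x) / (1 - ρ ^ 2))) x := by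
  have hpos : 0 < 1 - ρ ^ 2 := sub_pos.2 hρ
  have hquad : HasDerivAt (fun x => x ^ 2 + b ^ 2 - 2 * ρ * x * b) (2 * x - 2 * ρ * b) x := by
    simpa using ((hasDerivAt_pow 2 x).add_const (b ^ 2)).fun_sub
      (((hasDerivAt_id' x).const_mul (2 * ρ)).mul_const b)
  have hexponent := (hquad.div_const (2 * (1 - ρ ^ 2))).fun_neg
  refine (hexponent.exp.const_mul (2 * π * √(1 - ρ ^ 2))⁻¹).congr_deriv ?_
  rw [bivariateNormalPDF]
  field_simp
  ring

lemma hasDerivAt_sub_mul_div_sqrt_one_sub_sq (hρ : ρ ^ 2 < 1) :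
    HasDerivAt (fun r => (b - r * x) / √(1 - r ^ 2))
      ((ρ * b - x) / ((1 - ρ ^ 2) * √(1 - ρ ^ 2))) ρ := by
  have hpos : 0 < 1 - ρ ^ 2 := sub_pos.2 hρ
  have hsqrt : 0 < √(1 - ρ ^ 2) := Real.sqrt_pos.2 hpos
  have hnum : HasDerivAt (fun r => b - r * x) (-x) ρ := by
    simpa using ((hasDerivAt_id' ρ).mul_const x).const_sub b
  have hden : HasDerivAt (fun r : ℝ => 1 - r ^ 2) (-(2 * ρ)) ρ := by
    simpa using (hasDerivAt_pow 2 ρ).const_sub 1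
  refine (hnum.div (hden.sqrt hpos.ne') hsqrt.ne').congr_deriv ?_
  rw [Real.sq_sqrt hpos.le]
  field_simp
  rw [Real.sq_sqrt hpos.le]
  ring

lemma hasDerivAt_gaussianPDFReal_mul_stdGaussianCDF (hρ : ρ ^ 2 < 1) :
    HasDerivAt (fun r => φ x * Φ ((b - r * x) / √(1 - r ^ 2)))
      (bivariateNormalPDF x b ρ * ((ρ * b - x) / (1 - ρ ^ 2))) ρ := by
  have hpos : 0 < 1 - ρ ^ 2 := sub_pos.2 hρ
  have : 0 < √(1 - ρ ^ 2) := Real.sqrt_pos.2 hpos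
  refine (((hasDerivAt_stdGaussianCDF _).comp ρ
    (hasDerivAt_sub_mul_div_sqrt_one_sub_sq b x hρ)).const_mul (φ x)).congr_deriv ?_
  rw [bivariateNormalPDF_eq_mul_div x b hρ]
  field_simp

lemma norm_bivariateNormalPDF_mul_div_le {R : ℝ} (hρ : ρ ^ 2 ≤ R) (hR : R < 1) :
    ‖bivariateNormalPDF x b ρ * ((ρ * b - x) / (1 - ρ ^ 2))‖ ≤
      φ x * (|b| + |x|) * (√(1 - R) * (1 - R))⁻¹ := by
  have hρ1 : ρ ^ 2 < 1 := hρ.trans_lt hR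
  have : 0 < 1 - R := sub_pos.2 hR
  have hpos : 0 < 1 - ρ ^ 2 := sub_pos.2 hρ1
  have hφ : 0 ≤ φ x := gaussianPDFReal_nonneg 0 1 x
  have hdensity : bivariateNormalPDF x b ρ ≤ φ x / √(1 - R) :=
    (bivariateNormalPDF_le_div x b hρ1).trans (by gcongr)
  have hlinear : |ρ * b - x| ≤ |b| + |x| := by
    refine (abs_sub _ _).trans ?_
    rw [abs_mul]
    gcongr
    exact mul_le_of_le_one_left (abs_nonneg b) ((sq_le_one_iff_abs_le_one ρ).1 hρ1.le)
  rw [norm_mul, norm_div, Real.norm_of_nonneg (bivariateNormalPDF_nonneg x b ρ),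
    Real.norm_of_nonneg hpos.le, Real.norm_eq_abs]
  calc bivariateNormalPDF x b ρ * (|ρ * b - x| / (1 - ρ ^ 2))
      ≤ φ x / √(1 - R) * ((|b| + |x|) / (1 - R)) := by gcongr
    _ = φ x * (|b| + |x|) * (√(1 - R) * (1 - R))⁻¹ := by rw [div_mul_div_comm, div_eq_mul_inv]

lemma integrable_bivariateNormalPDF_mul_div (hρ : ρ ^ 2 < 1) :
    Integrable fun x => bivariateNormalPDF x b ρ * ((ρ * b - x) / (1 - ρ ^ 2)) :=
  ((integrable_gaussianPDFReal_mul_const_add_abs |b|).mul_const _).mono'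
    ((measurable_bivariateNormalPDF b ρ).mul (by fun_prop)).aestronglyMeasurable
    (.of_forall fun x => norm_bivariateNormalPDF_mul_div_le b x le_rfl hρ)

lemma integrable_bivariateNormalPDF (hρ : ρ ^ 2 < 1) :
    Integrable fun x => bivariateNormalPDF x b ρ :=
  ((integrable_gaussianPDFReal 0 1).div_const √(1 - ρ ^ 2)).mono'
    (measurable_bivariateNormalPDF b ρ).aestronglyMeasurable
    (.of_forall fun x => by
      rw [Real.norm_of_nonneg (bivariateNormalPDF_nonneg x b ρ)]
      exact bivariateNormalPDF_le_div x b hρ)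

lemma integral_Iic_bivariateNormalPDF_mul_div (hρ : ρ ^ 2 < 1) :
    ∫ x in Set.Iic a, bivariateNormalPDF x b ρ * ((ρ * b - x) / (1 - ρ ^ 2)) =
      bivariateNormalPDF a b ρ := by
  have hderiv (x : ℝ) (_ : x ∈ Set.Iic a) := hasDerivAt_bivariateNormalPDF_left b x hρ
  have hint := (integrable_bivariateNormalPDF_mul_div b hρ).integrableOn (s := Set.Iic a)
  rw [integral_Iic_of_hasDerivAt_of_tendsto' hderiv hint
    (tendsto_zero_of_hasDerivAt_of_integrableOn_Iic hderiv hint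
      (integrable_bivariateNormalPDF b hρ).integrableOn), sub_zero]

lemma hasDerivAt_integral_gaussianPDFReal_mul_stdGaussianCDF (hρ : ρ ^ 2 < 1) :
    HasDerivAt (fun r => ∫ x in Set.Iic a, φ x * Φ ((b - r * x) / √(1 - r ^ 2)))
      (bivariateNormalPDF a b ρ) ρ := by
  obtain ⟨R, hρR, hR⟩ := exists_between hρ
  have hmeas (r : ℝ) : Measurable fun x => φ x * Φ ((b - r * x) / √(1 - r ^ 2)) :=
    (measurable_gaussianPDFReal 0 1).mul (continuous_stdGaussianCDF.measurable.comp (by fun_prop))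
  have hint : Integrable fun x => φ x * Φ ((b - ρ * x) / √(1 - ρ ^ 2)) :=
    (integrable_gaussianPDFReal 0 1).mul_bdd (c := 1)
      (continuous_stdGaussianCDF.measurable.comp (by fun_prop)).aestronglyMeasurable
      (.of_forall fun x => norm_stdGaussianCDF_le_one _)
  rw [← integral_Iic_bivariateNormalPDF_mul_div a b hρ]
  exact (hasDerivAt_integral_of_dominated_loc_of_deriv_le
    (s := {r | r ^ 2 < R}) (bound := fun x => φ x * (|b| + |x|) * (√(1 - R) * (1 - R))⁻¹)
    ((isOpen_lt (by fun_prop) continuous_const).mem_nhds hρR)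
    (.of_forall fun r => (hmeas r).aestronglyMeasurable) hint.integrableOn
    (integrable_bivariateNormalPDF_mul_div b hρ).integrableOn.aestronglyMeasurable
    (.of_forall fun x r hr => norm_bivariateNormalPDF_mul_div_le b x (le_of_lt hr) hR)
    ((integrable_gaussianPDFReal_mul_const_add_abs |b|).mul_const _).integrableOn
    (.of_forall fun x r hr => hasDerivAt_gaussianPDFReal_mul_stdGaussianCDF b x
      (lt_trans hr hR))).2

end BivariateDensity

local notation "γ₂" => Measure.prod (gaussianReal 0 1) (gaussianReal 0 1)

section CorrelatedPair

lemma measureReal_prod_apply {α β : Type*} [MeasurableSpace α] [MeasurableSpace β]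
    {μ : Measure α} {ν : Measure β} [IsFiniteMeasure μ] [IsFiniteMeasure ν]
    {s : Set (α × β)} (hs : MeasurableSet s) :
    (μ.prod ν).real s = ∫ x, ν.real (Prod.mk x ⁻¹' s) ∂μ := by
  rw [measureReal_def, Measure.prod_apply hs]
  exact (integral_toReal (measurable_measure_prodMk_left hs).aemeasurable
    (.of_forall fun x => measure_lt_top ν _)).symm

/-- The linear map turning two independent standard normal variables into a standard normal pair
with correlation `ρ`, for `|ρ| ≤ 1`. -/
def correlate (ρ : ℝ) (p : ℝ × ℝ) : ℝ × ℝ := (p.1, ρ * p.1 + √(1 - ρ ^ 2) * p.2)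

/-- The value at `(a, b)` of the distribution function of the standard bivariate normal law with
correlation `ρ`; it is meaningful for `|ρ| ≤ 1`. -/
def bivariateNormalCDF (a b ρ : ℝ) : ℝ :=
  (Measure.map (correlate ρ) γ₂).real (Set.Iic a ×ˢ Set.Iic b)

lemma measurable_correlate (ρ : ℝ) : Measurable (correlate ρ) := by
  unfold correlate
  fun_prop

variable {ρ : ℝ} (a b : ℝ)

lemma bivariateNormalCDF_eq_measureReal :
    bivariateNormalCDF a b ρ = (γ₂).real (correlate ρ ⁻¹' Set.Iic a ×ˢ Set.Iic b) :=
  map_measureReal_apply (measurable_correlate ρ) (measurableSet_Iic.prod measurableSet_Iic)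

lemma bivariateNormalCDF_zero : bivariateNormalCDF a b 0 = Φ a * Φ b := by
  have hid : correlate 0 = id := by ext p <;> simp [correlate]
  rw [bivariateNormalCDF_eq_measureReal, hid, Set.preimage_id, measureReal_prod_prod]
  rfl

lemma preimage_prodMk_preimage_correlate (hρ : ρ ^ 2 < 1) (x : ℝ) [Decidable (x ∈ Set.Iic a)] :
    Prod.mk x ⁻¹' (correlate ρ ⁻¹' Set.Iic a ×ˢ Set.Iic b) =
      if x ∈ Set.Iic a then Set.Iic ((b - ρ * x) / √(1 - ρ ^ 2)) else ∅ := by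
  have hsqrt : 0 < √(1 - ρ ^ 2) := Real.sqrt_pos.2 (sub_pos.2 hρ)
  ext y
  split_ifs with hx <;> rw [Set.mem_Iic] at hx
  · simp [correlate, hx, le_div_iff₀ hsqrt, le_sub_iff_add_le', mul_comm y]
  · simp [correlate, hx]

lemma bivariateNormalCDF_eq_integral (hρ : ρ ^ 2 < 1) :
    bivariateNormalCDF a b ρ =
      ∫ x in Set.Iic a, φ x * Φ ((b - ρ * x) / √(1 - ρ ^ 2)) := by
  classical
  rw [bivariateNormalCDF_eq_measureReal, measureReal_prod_apply
    (measurable_correlate ρ (measurableSet_Iic.prod measurableSet_Iic)),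
    integral_gaussianReal_eq_integral_smul one_ne_zero, ← integral_indicator measurableSet_Iic]
  congr 1 with x
  rw [preimage_prodMk_preimage_correlate a b hρ, Set.indicator_apply]
  split_ifs
  · rfl
  · simp

theorem hasDerivAt_bivariateNormalCDF (hρ : ρ ^ 2 < 1) :
    HasDerivAt (bivariateNormalCDF a b) (bivariateNormalPDF a b ρ) ρ := by
  refine (hasDerivAt_integral_gaussianPDFReal_mul_stdGaussianCDF a b hρ).congr_of_eventuallyEq ?_
  filter_upwards [(isOpen_lt (continuous_pow 2) continuous_const).mem_nhds hρ] with r hr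
  exact bivariateNormalCDF_eq_integral a b hr

lemma hasGaussianLaw_correlate : HasGaussianLaw (correlate ρ) γ₂ :=
  IsGaussian.hasGaussianLaw_id.map ((ContinuousLinearMap.fst ℝ ℝ ℝ).prod
    (ρ • ContinuousLinearMap.fst ℝ ℝ ℝ + √(1 - ρ ^ 2) • ContinuousLinearMap.snd ℝ ℝ ℝ))

lemma memLp_two_fst : MemLp (fun p : ℝ × ℝ => p.1) 2 γ₂ :=
  (memLp_id_gaussianReal' 2 (by simp)).comp_fst _

lemma memLp_two_snd : MemLp (fun p : ℝ × ℝ => p.2) 2 γ₂ :=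
  (memLp_id_gaussianReal' 2 (by simp)).comp_snd _

lemma integral_correlate_fst : ∫ p, (correlate ρ p).1 ∂γ₂ = 0 := by
  simp [correlate, integral_fun_fst (f := fun x : ℝ => x)]

lemma integral_correlate_snd : ∫ p, (correlate ρ p).2 ∂γ₂ = 0 := by
  have hfst := (memLp_two_fst.integrable one_le_two).const_mul ρ
  have hsnd := (memLp_two_snd.integrable one_le_two).const_mul √(1 - ρ ^ 2)
  simp [correlate, integral_add hfst hsnd, integral_const_mul,
    integral_fun_fst (f := fun x : ℝ => x), integral_fun_snd (f := fun x : ℝ => x)]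

lemma covariance_fst_snd : cov[fun p : ℝ × ℝ => p.1, fun p => p.2; γ₂] = 0 :=
  covariance_fst_snd_prod (memLp_id_gaussianReal' 2 (by simp)) (memLp_id_gaussianReal' 2 (by simp))

lemma variance_fst : Var[fun p : ℝ × ℝ => p.1; γ₂] = 1 := by
  have := variance_map (μ := γ₂) (X := fun x : ℝ => x) (Y := Prod.fst) (by fun_prop) (by fun_prop)
  rw [measurePreserving_fst.map_eq, variance_fun_id_gaussianReal] at this
  exact this.symm

lemma variance_snd : Var[fun p : ℝ × ℝ => p.2; γ₂] = 1 := by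
  have := variance_map (μ := γ₂) (X := fun x : ℝ => x) (Y := Prod.snd) (by fun_prop) (by fun_prop)
  rw [measurePreserving_snd.map_eq, variance_fun_id_gaussianReal] at this
  exact this.symm

lemma covariance_correlate :
    cov[fun p => (correlate ρ p).1, fun p => (correlate ρ p).2; γ₂] = ρ := by
  have := covariance_add_right memLp_two_fst (memLp_two_fst.const_mul ρ)
    (memLp_two_snd.const_mul √(1 - ρ ^ 2))
  rw [covariance_const_mul_right, covariance_const_mul_right, covariance_fst_snd,
    covariance_self (by fun_prop), variance_fst, mul_one, mul_zero, add_zero] at this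
  exact this

lemma variance_correlate_snd (hρ : ρ ^ 2 ≤ 1) : Var[fun p => (correlate ρ p).2; γ₂] = 1 := by
  simp only [correlate]
  rw [variance_fun_add (memLp_two_fst.const_mul ρ) (memLp_two_snd.const_mul _), variance_const_mul,
    variance_const_mul, covariance_const_mul_left, covariance_const_mul_right, covariance_fst_snd,
    variance_fst, variance_snd, Real.sq_sqrt (sub_nonneg.2 hρ)]
  ring

lemma map_correlate_snd (hρ : ρ ^ 2 ≤ 1) :
    Measure.map (fun p => (correlate ρ p).2) γ₂ = gaussianReal 0 1 := by
  have hlaw : HasGaussianLaw (fun p => (correlate ρ p).2) γ₂ := hasGaussianLaw_correlate.snd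
  rw [hlaw.map_eq_gaussianReal, integral_correlate_snd, variance_correlate_snd hρ,
    Real.toNNReal_one]

lemma ae_correlate_snd_ne (hρ : ρ ^ 2 ≤ 1) : ∀ᵐ p ∂γ₂, (correlate ρ p).2 ≠ b := by
  have := nullSingletonClass_gaussianReal (μ := 0) one_ne_zero
  have hne : ∀ᵐ y ∂gaussianReal 0 1, y ≠ b := by simp [ae_iff]
  rw [← map_correlate_snd hρ] at hne
  exact ae_of_ae_map (measurable_correlate ρ).snd.aemeasurable hne

lemma continuousAt_bivariateNormalCDF (hρ : ρ ^ 2 ≤ 1) :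
    ContinuousAt (bivariateNormalCDF a b) ρ := by
  let f (r : ℝ) (p : ℝ × ℝ) : ℝ := (Set.Iic a ×ˢ Set.Iic b).indicator 1 (correlate r p)
  have hf (r : ℝ) : Measurable (f r) :=
    (measurable_one.indicator (measurableSet_Iic.prod measurableSet_Iic)).comp
      (measurable_correlate r)
  have hCDF : bivariateNormalCDF a b = fun r => ∫ p, f r p ∂γ₂ := by
    ext r
    rw [bivariateNormalCDF_eq_measureReal, ← integral_indicator_one
      (measurable_correlate r (measurableSet_Iic.prod measurableSet_Iic))]
    rfl
  rw [hCDF]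
  refine continuousAt_of_dominated (bound := 1)
    (.of_forall fun r => (hf r).aestronglyMeasurable)
    (.of_forall fun r => .of_forall fun p => (norm_indicator_le_norm_self 1 _).trans (by simp))
    (integrable_const 1) ?_
  filter_upwards [ae_correlate_snd_ne b hρ] with p hp
  have hf_eq (r : ℝ) : f r p =
      (Set.Iic a).indicator 1 p.1 * (Set.Iic b).indicator 1 (r * p.1 + √(1 - r ^ 2) * p.2) :=
    Set.indicator_prod_one
  have hb : ContinuousAt ((Set.Iic b).indicator (1 : ℝ → ℝ)) (correlate ρ p).2 :=
    continuousOn_const.continuousAt_indicator (by rwa [frontier_Iic])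
  simp only [hf_eq]
  exact continuousAt_const.mul
    (hb.comp (f := fun r : ℝ => r * p.1 + √(1 - r ^ 2) * p.2) (by fun_prop))

theorem integral_bivariateNormalPDF (hρ : ρ ^ 2 ≤ 1) :
    ∫ r in (0 : ℝ)..ρ, bivariateNormalPDF a b r = bivariateNormalCDF a b ρ - Φ a * Φ b := by
  have habs : |ρ| ≤ 1 := (sq_le_one_iff_abs_le_one ρ).1 hρ
  have hcont : ContinuousOn (bivariateNormalCDF a b) (Set.uIcc 0 ρ) := fun r hr =>
    (continuousAt_bivariateNormalCDF a b ((sq_le_one_iff_abs_le_one r).2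
      ((by simpa using Set.abs_sub_left_of_mem_uIcc hr : |r| ≤ |ρ|).trans habs))
      ).continuousWithinAt
  have hderiv (r : ℝ) (hr : r ∈ Set.Ioo (min 0 ρ) (max 0 ρ)) :
      HasDerivAt (bivariateNormalCDF a b) (bivariateNormalPDF a b r) r :=
    hasDerivAt_bivariateNormalCDF a b ((sq_lt_one_iff_abs_lt_one r).2
      (abs_lt.2 ⟨(le_min (by norm_num) (abs_le.1 habs).1).trans_lt hr.1,
        hr.2.trans_le (max_le zero_le_one (abs_le.1 habs).2)⟩))
  rw [intervalIntegral.integral_eq_sub_of_hasDeriv_right hcont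
    (fun r hr => (hderiv r hr).hasDerivWithinAt)
    (intervalIntegral.intervalIntegrable_deriv_of_nonneg hcont hderiv
      fun r _ => bivariateNormalPDF_nonneg a b r), bivariateNormalCDF_zero]

end CorrelatedPair

section GaussianPair

variable {Ω Ω' : Type*} [MeasurableSpace Ω] [MeasurableSpace Ω'] {P : Measure Ω} {Q : Measure Ω'}
  {X Y : Ω → ℝ} {X' Y' : Ω' → ℝ}

lemma map_prodMk_eq_of_hasGaussianLaw (h : HasGaussianLaw (fun ω => (X ω, Y ω)) P)
    (h' : HasGaussianLaw (fun ω => (X' ω, Y' ω)) Q) (hX : P[X] = Q[X']) (hY : P[Y] = Q[Y'])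
    (hVX : Var[X; P] = Var[X'; Q]) (hVY : Var[Y; P] = Var[Y'; Q])
    (hcov : cov[X, Y; P] = cov[X', Y'; Q]) :
    P.map (fun ω => (X ω, Y ω)) = Q.map fun ω => (X' ω, Y' ω) := by
  have := h.isProbabilityMeasure
  have := h'.isProbabilityMeasure
  refine Measure.ext_of_charFunDual (funext fun L => ?_)
  obtain ⟨α, β, hL⟩ : ∃ α β, ∀ x y, L (x, y) = α * x + β * y :=
    ⟨L (1, 0), L (0, 1), fun x y => by
      rw [← Prod.fst_add_snd (x, y), map_add, mul_comm, mul_comm (L _), ← smul_eq_mul,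
        ← smul_eq_mul, ← map_smul, ← map_smul]
      simp⟩
  rw [h.charFunDual_map_eq_fun, h'.charFunDual_map_eq_fun]
  simp only [hL]
  rw [integral_add (h.fst.integrable.const_mul _) (h.snd.integrable.const_mul _),
    integral_add (h'.fst.integrable.const_mul _) (h'.snd.integrable.const_mul _),
    variance_fun_add (h.fst.memLp_two.const_mul _) (h.snd.memLp_two.const_mul _),
    variance_fun_add (h'.fst.memLp_two.const_mul _) (h'.snd.memLp_two.const_mul _)]
  simp only [integral_const_mul, variance_const_mul, covariance_const_mul_left,
    covariance_const_mul_right, hX, hY, hVX, hVY, hcov]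

lemma covariance_eq_of_identDistrib
    (h : IdentDistrib (fun ω => (X ω, Y ω)) (fun ω => (X' ω, Y' ω)) P Q) :
    cov[X, Y; P] = cov[X', Y'; Q] := by
  have hX : P[X] = Q[X'] := (h.comp measurable_fst).integral_eq
  have hY : P[Y] = Q[Y'] := (h.comp measurable_snd).integral_eq
  rw [covariance, covariance, hX, hY]
  exact (h.comp (u := fun p : ℝ × ℝ => (p.1 - Q[X']) * (p.2 - Q[Y'])) (by fun_prop)).integral_eq

lemma rfun_eq_integral_bivariateNormalPDF (q : ℕ → ℝ) (i j : ℕ) (ρ : ℝ) :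
    rfun q i j ρ = ∫ r in (0 : ℝ)..ρ, bivariateNormalPDF (q i) (q j) r := rfl

/-- `X` and `Y` are jointly Gaussian, each with the standard normal law; their correlation, which
is arbitrary in `[-1, 1]`, is then `cov[X, Y; P]`. -/
structure IsStdGaussianPair {Ω : Type*} [MeasurableSpace Ω] (X Y : Ω → ℝ) (P : Measure Ω) :
    Prop where
  hasGaussianLaw : HasGaussianLaw (fun ω => (X ω, Y ω)) P
  integral_fst : P[X] = 0
  integral_snd : P[Y] = 0
  variance_fst : Var[X; P] = 1
  variance_snd : Var[Y; P] = 1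

lemma isStdGaussianPair_correlate {ρ : ℝ} (hρ : ρ ^ 2 ≤ 1) :
    IsStdGaussianPair (fun p => (correlate ρ p).1) (fun p => (correlate ρ p).2) γ₂ :=
  ⟨hasGaussianLaw_correlate, integral_correlate_fst (ρ := ρ), integral_correlate_snd,
    variance_fst, variance_correlate_snd hρ⟩

lemma IsStdGaussianPair.of_identDistrib (h' : IsStdGaussianPair X' Y' Q)
    (h : IdentDistrib (fun ω => (X ω, Y ω)) (fun ω => (X' ω, Y' ω)) P Q) :
    IsStdGaussianPair X Y P where
  hasGaussianLaw := ⟨h.map_eq ▸ h'.hasGaussianLaw.isGaussian_map⟩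
  integral_fst := (h.comp measurable_fst).integral_eq.trans h'.integral_fst
  integral_snd := (h.comp measurable_snd).integral_eq.trans h'.integral_snd
  variance_fst := (h.comp measurable_fst).variance_eq.trans h'.variance_fst
  variance_snd := (h.comp measurable_snd).variance_eq.trans h'.variance_snd

lemma sq_covariance_le_variance_mul_variance [IsProbabilityMeasure P] (hX : MemLp X 2 P)
    (hY : MemLp Y 2 P) : cov[X, Y; P] ^ 2 ≤ Var[X; P] * Var[Y; P] := by
  have hquad (t : ℝ) : 0 ≤ Var[Y; P] * (t * t) + 2 * cov[X, Y; P] * t + Var[X; P] := by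
    have hvar := variance_fun_add hX (hY.const_mul t)
    rw [variance_const_mul, covariance_const_mul_right] at hvar
    linarith [variance_nonneg (fun ω => X ω + t * Y ω) P]
  have hdiscrim := discrim_le_zero hquad
  rw [discrim] at hdiscrim
  linarith

namespace IsStdGaussianPair

variable (h : IsStdGaussianPair X Y P)
include h

lemma sq_covariance_le_one : cov[X, Y; P] ^ 2 ≤ 1 := by
  have := h.hasGaussianLaw.isProbabilityMeasure
  simpa [h.variance_fst, h.variance_snd] using sq_covariance_le_variance_mul_variance
    h.hasGaussianLaw.fst.memLp_two h.hasGaussianLaw.snd.memLp_two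

lemma map_eq_map_correlate :
    P.map (fun ω => (X ω, Y ω)) = Measure.map (correlate cov[X, Y; P]) γ₂ := by
  have hcorrelate := isStdGaussianPair_correlate h.sq_covariance_le_one
  exact map_prodMk_eq_of_hasGaussianLaw h.hasGaussianLaw hcorrelate.hasGaussianLaw
    (h.integral_fst.trans hcorrelate.integral_fst.symm)
    (h.integral_snd.trans hcorrelate.integral_snd.symm)
    (h.variance_fst.trans hcorrelate.variance_fst.symm)
    (h.variance_snd.trans hcorrelate.variance_snd.symm) covariance_correlate.symm

lemma map_fst : P.map X = gaussianReal 0 1 := by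
  rw [h.hasGaussianLaw.fst.map_eq_gaussianReal, h.integral_fst, h.variance_fst, Real.toNNReal_one]

lemma map_snd : P.map Y = gaussianReal 0 1 := by
  rw [h.hasGaussianLaw.snd.map_eq_gaussianReal, h.integral_snd, h.variance_snd, Real.toNNReal_one]

end IsStdGaussianPair

lemma integral_indicator_one_comp {E : Type*} [MeasurableSpace E] {Z : Ω → E}
    (hZ : AEMeasurable Z P) {s : Set E} (hs : MeasurableSet s) :
    ∫ ω, s.indicator (1 : E → ℝ) (Z ω) ∂P = (P.map Z).real s := by
  rw [← integral_indicator_one hs, integral_map hZ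
    (measurable_one.indicator hs).aestronglyMeasurable]

lemma memLp_indicator_one_comp [IsFiniteMeasure P] {E : Type*} [MeasurableSpace E] {Z : Ω → E}
    (hZ : AEMeasurable Z P) {s : Set E} (hs : MeasurableSet s) (p : ℝ≥0∞) :
    MemLp (fun ω => s.indicator (1 : E → ℝ) (Z ω)) p P :=
  .of_bound ((measurable_one.indicator hs).comp_aemeasurable hZ).aestronglyMeasurable 1
    (.of_forall fun ω => (norm_indicator_le_norm_self 1 (Z ω)).trans (by simp))

namespace IsStdGaussianPair

variable (h : IsStdGaussianPair X Y P)
include h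

theorem covariance_indicator_Iic (a b : ℝ) :
    cov[fun ω => (Set.Iic a).indicator 1 (X ω), fun ω => (Set.Iic b).indicator 1 (Y ω); P] =
      ∫ r in (0 : ℝ)..cov[X, Y; P], bivariateNormalPDF a b r := by
  have := h.hasGaussianLaw.isProbabilityMeasure
  have hX := h.hasGaussianLaw.fst.aemeasurable
  have hY := h.hasGaussianLaw.snd.aemeasurable
  have hmul (ω : Ω) : (Set.Iic a).indicator (1 : ℝ → ℝ) (X ω) * (Set.Iic b).indicator 1 (Y ω) =
      (Set.Iic a ×ˢ Set.Iic b).indicator 1 (X ω, Y ω) := Set.indicator_prod_one.symm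
  have hjoint : ∫ ω, (Set.Iic a ×ˢ Set.Iic b).indicator (1 : ℝ × ℝ → ℝ) (X ω, Y ω) ∂P =
      bivariateNormalCDF a b cov[X, Y; P] := by
    rw [integral_indicator_one_comp (hX.prodMk hY) (measurableSet_Iic.prod measurableSet_Iic),
      h.map_eq_map_correlate, bivariateNormalCDF]
  rw [covariance_eq_sub (memLp_indicator_one_comp hX measurableSet_Iic 2)
    (memLp_indicator_one_comp hY measurableSet_Iic 2),
    integral_bivariateNormalPDF a b h.sq_covariance_le_one, ← hjoint,
    integral_indicator_one_comp hX measurableSet_Iic, h.map_fst,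
    integral_indicator_one_comp hY measurableSet_Iic, h.map_snd]
  simp only [Pi.mul_apply, hmul]
  rfl

theorem covariance_indicator_Ioi (a b : ℝ) :
    cov[fun ω => (Set.Ioi a).indicator 1 (X ω), fun ω => (Set.Ioi b).indicator 1 (Y ω); P] =
      ∫ r in (0 : ℝ)..cov[X, Y; P], bivariateNormalPDF a b r := by
  have := h.hasGaussianLaw.isProbabilityMeasure
  have hX := memLp_indicator_one_comp h.hasGaussianLaw.fst.aemeasurable
    (measurableSet_Iic (a := a)) 2
  have hY := memLp_indicator_one_comp h.hasGaussianLaw.snd.aemeasurable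
    (measurableSet_Iic (a := b)) 2
  have hcompl (c x : ℝ) :
      (Set.Ioi c).indicator (1 : ℝ → ℝ) x = 1 - (Set.Iic c).indicator 1 x := by
    rw [← Set.compl_Iic, Set.indicator_compl, Pi.sub_apply, Pi.one_apply]
  simp only [hcompl]
  rw [covariance_const_sub_left (hX.integrable one_le_two),
    covariance_const_sub_right (hY.integrable one_le_two), neg_neg, h.covariance_indicator_Iic]

theorem covariance_indicator_Ioc {a b c d : ℝ} (hab : a ≤ b) (hcd : c ≤ d) :
    cov[fun ω => (Set.Ioc a b).indicator 1 (X ω), fun ω => (Set.Ioc c d).indicator 1 (Y ω); P] =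
      (∫ r in (0 : ℝ)..cov[X, Y; P], bivariateNormalPDF b d r)
        - (∫ r in (0 : ℝ)..cov[X, Y; P], bivariateNormalPDF b c r)
        - (∫ r in (0 : ℝ)..cov[X, Y; P], bivariateNormalPDF a d r)
        + ∫ r in (0 : ℝ)..cov[X, Y; P], bivariateNormalPDF a c r := by
  have := h.hasGaussianLaw.isProbabilityMeasure
  have hX (u : ℝ) := memLp_indicator_one_comp h.hasGaussianLaw.fst.aemeasurable
    (measurableSet_Iic (a := u)) 2
  have hY (u : ℝ) := memLp_indicator_one_comp h.hasGaussianLaw.snd.aemeasurable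
    (measurableSet_Iic (a := u)) 2
  have hdiff {u v : ℝ} (huv : u ≤ v) (x : ℝ) : (Set.Ioc u v).indicator (1 : ℝ → ℝ) x =
      (Set.Iic v).indicator 1 x - (Set.Iic u).indicator 1 x := by
    rw [← Set.Iic_sdiff_Iic, Set.indicator_sdiff (Set.Iic_subset_Iic.2 huv), Pi.sub_apply]
  simp only [hdiff hab, hdiff hcd]
  rw [covariance_fun_sub_fun_sub (hX b) (hX a) (hY d) (hY c)]
  simp only [h.covariance_indicator_Iic]

lemma covariance_indicator_armSet {K : ℕ} {q : ℕ → ℝ} (hq : MonotoneOn q (Set.Ioo 0 K))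
    (k : Fin K) :
    cov[fun ω => (armSet q K k).indicator 1 (X ω), fun ω => (armSet q K k).indicator 1 (Y ω); P] =
      fkfun q K k cov[X, Y; P] := by
  unfold armSet fkfun
  split_ifs with hfirst hlast
  · exact h.covariance_indicator_Iic _ _
  · exact h.covariance_indicator_Ioi _ _
  · have hle : q k ≤ q (k + 1) :=
      hq ⟨by lia, by lia⟩ ⟨by lia, by lia⟩ (by lia)
    have hcomm (r : ℝ) : bivariateNormalPDF (q (k + 1)) (q k) r =
        bivariateNormalPDF (q k) (q (k + 1)) r := bivariateNormalPDF_comm _ _ r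
    rw [h.covariance_indicator_Ioc hle hle]
    simp only [hcomm]
    simp only [rfun_eq_integral_bivariateNormalPDF]
    ring

end IsStdGaussianPair

end GaussianPair

section GaussianVector

variable {ι κ Ω : Type*} [Fintype ι] [MeasurableSpace Ω] {P : Measure Ω}

lemma covariance_dotProduct_dotProduct [IsFiniteMeasure P] {X : ι → Ω → ℝ}
    (hX : ∀ i, MemLp (X i) 2 P) (u v : ι → ℝ) :
    cov[fun ω => u ⬝ᵥ (X · ω), fun ω => v ⬝ᵥ (X · ω); P] =
      u ⬝ᵥ ((Matrix.of fun i j => cov[X i, X j; P]) *ᵥ v) := by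
  simp only [dotProduct, mulVec, of_apply]
  rw [covariance_fun_sum_fun_sum (fun i => (hX i).const_mul _) fun i => (hX i).const_mul _]
  simp only [covariance_const_mul_left, covariance_const_mul_right, Finset.mul_sum]
  exact Finset.sum_congr rfl fun i _ => Finset.sum_congr rfl fun j _ => by ring

local notation "γ[" ι "]" => Measure.pi fun _ : ι => gaussianReal 0 1

lemma hasLaw_eval_pi_gaussianReal (i : ι) :
    HasLaw (fun z : ι → ℝ => z i) (gaussianReal 0 1) γ[ι] :=
  (measurePreserving_eval (fun _ : ι => gaussianReal 0 1) i).hasLaw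

lemma hasGaussianLaw_eval_pi_gaussianReal : HasGaussianLaw (fun (z : ι → ℝ) i => z i) γ[ι] :=
  (iIndepFun_pi fun _ => aemeasurable_id).hasGaussianLaw
    fun i => (hasLaw_eval_pi_gaussianReal i).hasGaussianLaw

lemma covariance_eval_pi_gaussianReal [DecidableEq ι] :
    (Matrix.of fun i j => cov[fun z : ι → ℝ => z i, fun z => z j; γ[ι]]) = 1 := by
  ext i j
  rw [of_apply, one_apply]
  split_ifs with hij
  · rw [← hij, covariance_self (measurable_pi_apply i).aemeasurable]
    have hvar := (hasLaw_eval_pi_gaussianReal i).variance_eq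
    rwa [variance_id_gaussianReal] at hvar
  · exact ((iIndepFun_pi fun _ => aemeasurable_id).indepFun hij).covariance_eq_zero
      (hasGaussianLaw_eval_pi_gaussianReal.eval i).memLp_two
      (hasGaussianLaw_eval_pi_gaussianReal.eval j).memLp_two

lemma covariance_mulVec_pi_gaussianReal (A : Matrix κ ι ℝ) (i j : κ) :
    cov[fun z => (A *ᵥ z) i, fun z => (A *ᵥ z) j; γ[ι]] = (A * Aᵀ) i j := by
  classical
  have hX (l : ι) : MemLp (fun z : ι → ℝ => z l) 2 γ[ι] :=
    (hasGaussianLaw_eval_pi_gaussianReal.eval l).memLp_two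
  have hcov := covariance_dotProduct_dotProduct hX (A i) (A j)
  rwa [covariance_eval_pi_gaussianReal, one_mulVec] at hcov

lemma isStdGaussianPair_mulVec [Finite κ] {A : Matrix κ ι ℝ} (hA : ∀ i, (A * Aᵀ) i i = 1)
    (i j : κ) :
    IsStdGaussianPair (fun z => (A *ᵥ z) i) (fun z => (A *ᵥ z) j) γ[ι] := by
  have := Fintype.ofFinite κ
  have hlaw : HasGaussianLaw (fun z i => (A *ᵥ z) i) γ[ι] :=
    hasGaussianLaw_eval_pi_gaussianReal.map (LinearMap.toContinuousLinearMap A.mulVecLin)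
  have hmean (l : κ) : ∫ z, (A *ᵥ z) l ∂γ[ι] = 0 := by
    simp only [mulVec, dotProduct]
    rw [integral_finsetSum _ fun m _ =>
      (hasGaussianLaw_eval_pi_gaussianReal.eval m).integrable.const_mul _]
    simp [integral_const_mul, (hasLaw_eval_pi_gaussianReal _).integral_eq]
  have hvar (l : κ) : Var[fun z => (A *ᵥ z) l; γ[ι]] = 1 := by
    rw [← covariance_self (hlaw.eval l).aemeasurable, covariance_mulVec_pi_gaussianReal, hA]
  exact ⟨hlaw.prodMk i j, hmean i, hmean j, hvar i, hvar j⟩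

variable {T : Ω → κ → ℝ} {A : Matrix κ ι ℝ} (hT : IdentDistrib T (fun z => A *ᵥ z) P γ[ι])
include hT

lemma covariance_of_identDistrib_mulVec (i j : κ) :
    cov[fun ω => T ω i, fun ω => T ω j; P] = (A * Aᵀ) i j := by
  rw [← covariance_mulVec_pi_gaussianReal]
  exact covariance_eq_of_identDistrib (hT.comp (u := fun x : κ → ℝ => (x i, x j)) (by fun_prop))

lemma isStdGaussianPair_of_identDistrib_mulVec [Finite κ] (hA : ∀ i, (A * Aᵀ) i i = 1)
    (i j : κ) : IsStdGaussianPair (fun ω => T ω i) (fun ω => T ω j) P :=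
  (isStdGaussianPair_mulVec hA i j).of_identDistrib
    (hT.comp (u := fun x : κ → ℝ => (x i, x j)) (by fun_prop))

end GaussianVector

section HorvitzThompson

lemma measurableSet_armSet (q : ℕ → ℝ) {K : ℕ} (k : Fin K) : MeasurableSet (armSet q K k) := by
  unfold armSet
  split_ifs
  exacts [measurableSet_Iic, measurableSet_Ioi, measurableSet_Ioc]

lemma var_eq_variance {Ω : Type*} [MeasureSpace Ω] {U : Ω → ℝ} (hU : AEMeasurable U) :
    var U = Var[U] := (variance_eq_integral hU).symm

theorem var_HT_gaussianized_eq_general {Ω ι : Type*} [MeasureSpace Ω]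
    [IsProbabilityMeasure (volume : Measure Ω)] [Fintype ι] {K : ℕ} {q : ℕ → ℝ}
    (hq : MonotoneOn q (Set.Ioo 0 K)) {S : Matrix ι ι ℝ} {T : Ω → ι → ℝ}
    (hT : ∀ i j, IsStdGaussianPair (fun ω => T ω i) (fun ω => T ω j) volume)
    (hS : ∀ i j, cov[fun ω => T ω i, fun ω => T ω j] = S i j) {D : Ω → ι → Fin K} {k : Fin K}
    (hD : ∀ ω i, D ω i = k ↔ T ω i ∈ armSet q K k) (c : ℝ) (y : ι → ℝ) :
    var (fun ω => c * ∑ i, (if D ω i = k then y i else 0)) =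
      c ^ 2 * (y ⬝ᵥ ((Matrix.of fun i j => fkfun q K k (S i j)) *ᵥ y)) := by
  classical
  let I (i : ι) (ω : Ω) : ℝ := (armSet q K k).indicator 1 (T ω i)
  have hI (i : ι) : MemLp (I i) 2 volume :=
    memLp_indicator_one_comp (hT i i).hasGaussianLaw.fst.aemeasurable
      (measurableSet_armSet q k) 2
  have hcov : (fun i j => cov[I i, I j]) = fun i j => fkfun q K k (S i j) := by
    ext i j
    rw [(hT i j).covariance_indicator_armSet hq, hS]
  have hsum (ω : Ω) : ∑ i, (if D ω i = k then y i else 0) = y ⬝ᵥ (I · ω) := by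
    simp [I, hD, dotProduct, Set.indicator_apply]
  have hmeas : AEMeasurable fun ω => y ⬝ᵥ (I · ω) :=
    Finset.aemeasurable_fun_sum _ fun i _ => (hI i).aemeasurable.const_mul _
  simp only [hsum]
  rw [var_eq_variance (hmeas.const_mul c), variance_const_mul, ← covariance_self hmeas,
    covariance_dotProduct_dotProduct hI, hcov]

lemma monotoneOn_of_stdGaussianCDF_eq_div {K : ℕ} {q : ℕ → ℝ}
    (hq : ∀ m : ℕ, 0 < m → m < K → Φ (q m) = (m : ℝ) / K) : MonotoneOn q (Set.Ioo 0 K) := by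
  intro i hi j hj hij
  by_contra! hlt
  have hK : (0 : ℝ) < K := by exact_mod_cast hi.1.trans hi.2
  have hle : Φ (q j) ≤ Φ (q i) := by
    rw [stdGaussianCDF_eq_cdf]
    exact monotone_cdf _ hlt.le
  rw [hq j hj.1 hj.2, hq i hi.1 hi.2, div_le_div_iff_of_pos_right hK, Nat.cast_le] at hle
  exact hlt.ne (congrArg q (hle.antisymm hij))

end HorvitzThompson

/-- Let `K ≥ 2`, `Σ` in the correlation elliptope, `T ~ N(0, Σ)` and
`D_i = g(T_i)`. Then for every arm `k`, the Horvitz–Thompson estimator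
`τ̂_k = (K/n) Σ_i 1{D_i = k} Y_i(k)` satisfies
`Var(τ̂_k) = (K²/n²) · Y(k)ᵀ f_k(Σ) Y(k)`, with `f_k` applied entrywise. -/
theorem var_HT_gaussianized_eq
    {Ω : Type*} [MeasureSpace Ω] [IsProbabilityMeasure (volume : Measure Ω)]
    (n K : ℕ) (hn : 0 < n) (hK : 2 ≤ K)
    (q : ℕ → ℝ) (hq : ∀ m : ℕ, 0 < m → m < K → stdGaussianCDF (q m) = (m : ℝ) / K)
    (S : Matrix (Fin n) (Fin n) ℝ) (hSpsd : S.PosSemidef) (hSdiag : ∀ i, S i i = 1)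
    (A : Matrix (Fin n) (Fin n) ℝ) (hA : A * Aᵀ = S)
    (T : Ω → Fin n → ℝ) (hT : Measurable T)
    (hTlaw : Measure.map T volume =
      Measure.map (fun z => A *ᵥ z) (Measure.pi fun _ : Fin n => gaussianReal 0 1))
    (D : Ω → Fin n → Fin K)
    (hD : ∀ ω i (k : Fin K), D ω i = k ↔ T ω i ∈ armSet q K k)
    (Y : Fin K → Fin n → ℝ) (k : Fin K) :
    var (fun ω => (K : ℝ) / n * ∑ i, (if D ω i = k then Y k i else 0)) =
      (K : ℝ) ^ 2 / (n : ℝ) ^ 2 *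
        (Y k ⬝ᵥ ((Matrix.of fun i j => fkfun q K k (S i j)) *ᵥ Y k)) := by
  have hident : IdentDistrib T (fun z => A *ᵥ z) volume (Measure.pi fun _ => gaussianReal 0 1) :=
    ⟨hT.aemeasurable, by fun_prop, hTlaw⟩
  subst hA
  rw [← div_pow]
  exact var_HT_gaussianized_eq_general (monotoneOn_of_stdGaussianCDF_eq_div hq)
    (isStdGaussianPair_of_identDistrib_mulVec hident hSdiag)
    (covariance_of_identDistrib_mulVec hident) (fun ω i => hD ω i k) _ _

end
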